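/- Let 𝒫 be a simple, branching, atomic quasinuclear type system. Then there exists a nonempty, nowhere dense, perfect subset K of 𝔠 such that Stab_V(𝒫) equals the setwise stabilizer Stab_V(K) = {g ∈ V : Kg = K}; furthermore, the action of Stab_V(K) on K is minimal (every orbit is dense in K). -/

import Mathlib

/-!
Take for `K` the set of infinite words no prefix of which lies in the nucleus `ℛ`. Since `ℛ` is a
single child-closed type and `𝒫` is reduced, an address outside `ℛ` has a child outside `ℛ`, so
the cone of `α` meets `K` exactly when `α ∉ ℛ`.

Addresses of the same type see the same part of `K` below them, so the relation of seeing the same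
part of `K` is a quotient of `𝒫`. It is not universal, since addresses in `ℛ` see nothing and the
empty address sees `K ≠ ∅`; simplicity then makes it equal to `𝒫`, and every element of `V`
preserving `K` stabilizes `𝒫`. Conversely, as `ℛ` is a single type, it consists of the addresses
equivalent to all their descendants. This description only mentions equivalence, so it is
preserved by the stabilizer of `𝒫`, which therefore preserves `K`.

Every address has a descendant in `ℛ`, so `K` is nowhere dense; a type in `𝒬†` lies below every
address that meets `K`, so `K` has no isolated points. For minimality, let `x, y ∈ K` have long
prefixes `α` and `β`. Strong connectivity of `𝒬` gives a descendant `βγ` of the type of `α`, and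
interchanging the cones of `α` and `βγ` preserves `K` and moves `x` into the cone of `β`.
-/

/-- Addresses: finite words over the alphabet `{0,1}` (`Bool`). -/
abbrev Addr : Type := List Bool

/-- Cantor space: infinite words over the alphabet `{0,1}`. -/
abbrev Cantor : Type := ℕ → Bool

/-- Prepend the finite word `α` to the infinite word `w`. -/
def wcat (α : Addr) (w : Cantor) : Cantor := fun n =>
  if h : n < α.length then α.get ⟨n, h⟩ else w (n - α.length)

/-- The cone of the address `α`: the set of infinite words having `α` as a prefix. -/
def cone (α : Addr) : Set Cantor := Set.range (wcat α)

/-- `g` is a prefix substitution map: there are partitions of Cantor space into cones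
`(A i)𝔠` and `(B i)𝔠` such that `g` maps `(A i) w` to `(B i) w`. -/
def IsPrefixSubst (g : Equiv.Perm Cantor) : Prop :=
  ∃ (n : ℕ) (A B : Fin n → Addr),
    (∀ i j, i ≠ j → Disjoint (cone (A i)) (cone (A j))) ∧
    (⋃ i, cone (A i)) = Set.univ ∧
    (∀ i j, i ≠ j → Disjoint (cone (B i)) (cone (B j))) ∧
    (⋃ i, cone (B i)) = Set.univ ∧
    (∀ i w, g (wcat (A i) w) = wcat (B i) w)

/-- Thompson's group `V`, as the set of prefix substitution maps inside `Equiv.Perm Cantor`. -/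
def VSet : Set (Equiv.Perm Cantor) := { g | IsPrefixSubst g }

/-- `α ^ g = β` : `g` maps the cone of `α` onto the cone of `β` by the prefix
substitution `α ↦ β`. -/
def actsOn (g : Equiv.Perm Cantor) (α β : Addr) : Prop :=
  ∀ w, g (wcat α w) = wcat β w

/-- A subset of `Equiv.Perm Cantor` that is closed under the group operations. -/
def IsSubgroupSet (M : Set (Equiv.Perm Cantor)) : Prop :=
  (1 : Equiv.Perm Cantor) ∈ M ∧ (∀ g ∈ M, ∀ h ∈ M, g * h ∈ M) ∧ ∀ g ∈ M, g⁻¹ ∈ M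

/-- `M` is a maximal subgroup of Thompson's group `V`. -/
def IsMaximalSubgroupOfV (M : Set (Equiv.Perm Cantor)) : Prop :=
  IsSubgroupSet M ∧ M ⊆ VSet ∧ M ≠ VSet ∧
    ∀ H : Set (Equiv.Perm Cantor),
      IsSubgroupSet H → M ⊆ H → H ⊆ VSet → H = M ∨ H = VSet

/-- A relation on addresses is coherent if `α ∼ β` implies `α0 ∼ β0` and `α1 ∼ β1`. -/
def Coherent (r : Addr → Addr → Prop) : Prop :=
  ∀ α β, r α β → r (α ++ [false]) (β ++ [false]) ∧ r (α ++ [true]) (β ++ [true])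

/-- A relation on addresses is reduced if `α0 ∼ β0` and `α1 ∼ β1` imply `α ∼ β`. -/
def Reduced (r : Addr → Addr → Prop) : Prop :=
  ∀ α β, r (α ++ [false]) (β ++ [false]) → r (α ++ [true]) (β ++ [true]) → r α β

/-- A type system: a coherent and reduced equivalence relation on addresses
(identified with the partition of `Ω` into its classes). -/
def IsTypeSystem (r : Addr → Addr → Prop) : Prop :=
  Equivalence r ∧ Coherent r ∧ Reduced r

/-- `g` fixes the parts of `r`: for all but finitely many addresses `α`, the image
`α ^ g` is defined and equivalent to `α`. -/
def FixesParts (r : Addr → Addr → Prop) (g : Equiv.Perm Cantor) : Prop :=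
  { α : Addr | ¬ ∃ β, actsOn g α β ∧ r α β }.Finite

/-- `g` stabilizes `r`: on some cofinite set of addresses, `α ^ g` is defined and `g`
preserves equivalence and inequivalence of addresses. -/
def Stabilizes (r : Addr → Addr → Prop) (g : Equiv.Perm Cantor) : Prop :=
  ∃ Ω₀ : Set Addr, Ω₀ᶜ.Finite ∧ (∀ α ∈ Ω₀, ∃ β, actsOn g α β) ∧
    ∀ α ∈ Ω₀, ∀ α' ∈ Ω₀, ∀ β β', actsOn g α β → actsOn g α' β' → (r α α' ↔ r β β')

/-- `Fix_V(𝒫)`: the elements of Thompson's group `V` fixing the parts of `r`. -/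
def FixSet (r : Addr → Addr → Prop) : Set (Equiv.Perm Cantor) :=
  { g | IsPrefixSubst g ∧ FixesParts r g }

/-- `Stab_V(𝒫)`: the elements of Thompson's group `V` stabilizing `r`. -/
def StabSet (r : Addr → Addr → Prop) : Set (Equiv.Perm Cantor) :=
  { g | IsPrefixSubst g ∧ Stabilizes r g }

/-- The type system of `s` is a quotient of that of `r`. -/
def IsQuotientOf (s r : Addr → Addr → Prop) : Prop :=
  IsTypeSystem s ∧ ∀ α β, r α β → s α β

/-- A simple type system: the universal relation is a proper quotient, and every
quotient is either the type system itself or the universal one. -/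
def SimpleTS (r : Addr → Addr → Prop) : Prop :=
  IsTypeSystem r ∧ (∃ α β : Addr, ¬ r α β) ∧
    ∀ s : Addr → Addr → Prop, IsQuotientOf s r →
      (∀ α β, s α β ↔ r α β) ∨ ∀ α β, s α β

/-- The type (equivalence class) of the address `α`. -/
def typeOf (r : Addr → Addr → Prop) (α : Addr) : Set Addr := { β | r α β }

/-- `S` is a union of `r`-classes, i.e. a set of types of the type system. -/
def Saturated (r : Addr → Addr → Prop) (S : Set Addr) : Prop :=
  ∀ α ∈ S, ∀ β, r α β → β ∈ S

/-- `S` is child-closed: with each address (type) it contains both of its children. -/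
def ChildClosed (S : Set Addr) : Prop :=
  ∀ α ∈ S, α ++ [false] ∈ S ∧ α ++ [true] ∈ S

/-- The word `γ` determines a path through `S` from (the type of) `α`. -/
def PathThrough (S : Set Addr) (α γ : Addr) : Prop :=
  ∀ ζ : Addr, ζ <+: γ → α ++ ζ ∈ S

/-- `S` is strongly connected. -/
def StronglyConnected (r : Addr → Addr → Prop) (S : Set Addr) : Prop :=
  ∀ α ∈ S, ∀ β ∈ S, ∃ γ : Addr, γ ≠ [] ∧ PathThrough S α γ ∧ r (α ++ γ) β

/-- A nucleus: a (nonempty) child-closed and strongly connected set of types. -/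
def IsNucleus (r : Addr → Addr → Prop) (S : Set Addr) : Prop :=
  S.Nonempty ∧ Saturated r S ∧ ChildClosed S ∧ StronglyConnected r S

/-- `S` consists of exactly one type. -/
def IsSingleType (r : Addr → Addr → Prop) (S : Set Addr) : Prop :=
  ∃ α : Addr, S = typeOf r α

/-- A multinuclear type system: finitely many pairwise disjoint nuclei containing the
types of all sufficiently long addresses. -/
def Multinuclear (r : Addr → Addr → Prop) : Prop :=
  ∃ (k : ℕ) (Q : Fin k → Set Addr), 0 < k ∧ (∀ i, IsNucleus r (Q i)) ∧
    (∀ i j, i ≠ j → Disjoint (Q i) (Q j)) ∧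
    ∃ t : ℕ, 0 < t ∧ ∀ α : Addr, t ≤ α.length → ∃ i, α ∈ Q i

/-- A nuclear type system: a single nucleus containing the types of all sufficiently
long addresses. -/
def Nuclear (r : Addr → Addr → Prop) : Prop :=
  ∃ Q : Set Addr, IsNucleus r Q ∧ ∃ t : ℕ, 0 < t ∧ ∀ α : Addr, t ≤ α.length → α ∈ Q

/-- An atomic binuclear type system: two disjoint singleton nuclei containing the types
of all sufficiently long addresses. -/
def AtomicBinuclear (r : Addr → Addr → Prop) : Prop :=
  ∃ Q₁ Q₂ : Set Addr, IsNucleus r Q₁ ∧ IsNucleus r Q₂ ∧ Disjoint Q₁ Q₂ ∧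
    IsSingleType r Q₁ ∧ IsSingleType r Q₂ ∧
    ∃ t : ℕ, 0 < t ∧ ∀ α : Addr, t ≤ α.length → α ∈ Q₁ ∪ Q₂

/-- The data `(𝒬, ℛ)` witnessing that a type system is quasinuclear. -/
def QuasinuclearData (r : Addr → Addr → Prop) (Q R : Set Addr) : Prop :=
  Q.Nonempty ∧ R.Nonempty ∧ Saturated r Q ∧ Saturated r R ∧ Disjoint Q R ∧
    (∃ t : ℕ, 0 < t ∧ ∀ α : Addr, t ≤ α.length → α ∈ Q ∪ R) ∧
    IsNucleus r R ∧ StronglyConnected r Q ∧ ChildClosed (Q ∪ R) ∧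
    ∀ α ∈ Q, ∀ β ∈ R, ∃ γ : Addr, r (α ++ γ) β

/-- A quasinuclear type system. -/
def Quasinuclear (r : Addr → Addr → Prop) : Prop :=
  ∃ Q R : Set Addr, QuasinuclearData r Q R

/-- `𝒬†`: the types of `𝒬` both of whose children lie in `𝒬`. -/
def QDagger (Q : Set Addr) : Set Addr :=
  { α ∈ Q | α ++ [false] ∈ Q ∧ α ++ [true] ∈ Q }

/-- An atomic quasinuclear type system: the nucleus `ℛ` is a single type. -/
def AtomicQuasinuclear (r : Addr → Addr → Prop) : Prop :=
  ∃ Q R : Set Addr, QuasinuclearData r Q R ∧ IsSingleType r R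

/-- `u` and `v` lie in the same tail class. -/
def TailEq (u v : Cantor) : Prop :=
  ∃ (α β : Addr) (w : Cantor), u = wcat α w ∧ v = wcat β w

/-- A point of Cantor space is rational if it is eventually periodic. -/
def EventuallyPeriodic (u : Cantor) : Prop :=
  ∃ k p : ℕ, 0 < p ∧ ∀ n : ℕ, k ≤ n → u (n + p) = u n

/-- The setwise stabilizer in Thompson's group `V` of a subset `D` of Cantor space. -/
def setStab (D : Set Cantor) : Set (Equiv.Perm Cantor) :=
  { g | IsPrefixSubst g ∧ (fun w => g w) '' D = D }

/-! ### Words and cones -/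

/-- The prefix of length `n` of an infinite word. -/
def Cantor.take (n : ℕ) (x : Cantor) : Addr := List.ofFn fun i : Fin n => x i

/-- The infinite word left after deleting the first `n` letters; with `Cantor.take` it splits an
infinite word at position `n`. -/
def Cantor.drop (n : ℕ) (x : Cantor) : Cantor := fun k => x (n + k)

namespace Cantor

@[simp]
theorem length_take (n : ℕ) (x : Cantor) : (take n x).length = n := List.length_ofFn

theorem take_succ (n : ℕ) (x : Cantor) : take (n + 1) x = take n x ++ [x n] :=
  List.ofFn_succ_last

end Cantor

@[simp]
theorem wcat_nil (w : Cantor) : wcat [] w = w := rfl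

theorem wcat_append (α β : Addr) (w : Cantor) : wcat (α ++ β) w = wcat α (wcat β w) := by
  funext n
  simp only [wcat, List.length_append, List.get_eq_getElem, List.getElem_append]
  split_ifs <;> first | rfl | omega | (congr 1; omega)

theorem wcat_append_singleton_length (α : Addr) (b : Bool) (w : Cantor) :
    wcat (α ++ [b]) w α.length = b := by
  simp [wcat]

@[simp]
theorem drop_wcat (α : Addr) (w : Cantor) : Cantor.drop α.length (wcat α w) = w := by
  funext n
  simp [wcat, Cantor.drop]

theorem take_wcat {α : Addr} {n : ℕ} (hn : n ≤ α.length) (w : Cantor) :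
    Cantor.take n (wcat α w) = α.take n :=
  List.ext_getElem (by simp [hn]) fun i hi _ => by
    rw [Cantor.length_take] at hi
    simp [wcat, Cantor.take, hi.trans_le hn]

@[simp]
theorem wcat_take_drop (n : ℕ) (x : Cantor) : wcat (Cantor.take n x) (Cantor.drop n x) = x := by
  funext i
  by_cases hi : i < n
  · simp [wcat, Cantor.take, hi]
  · simp [wcat, Cantor.drop, hi, Nat.add_sub_cancel' (not_lt.1 hi)]

theorem exists_eq_wcat (x : Cantor) (n : ℕ) : ∃ α w, α.length = n ∧ x = wcat α w :=
  ⟨_, _, Cantor.length_take n x, (wcat_take_drop n x).symm⟩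

theorem wcat_mem_cone (α : Addr) (w : Cantor) : wcat α w ∈ cone α := ⟨w, rfl⟩

theorem mem_cone_take (n : ℕ) (x : Cantor) : x ∈ cone (Cantor.take n x) :=
  ⟨_, wcat_take_drop n x⟩

theorem mem_cone_iff {α : Addr} {x : Cantor} : x ∈ cone α ↔ Cantor.take α.length x = α := by
  constructor
  · rintro ⟨w, rfl⟩
    rw [take_wcat le_rfl, List.take_length]
  · intro h
    simpa only [h] using mem_cone_take α.length x

theorem wcat_mem_cone_iff {α β : Addr} (h : β.length ≤ α.length) (w : Cantor) :
    wcat α w ∈ cone β ↔ β <+: α := by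
  rw [mem_cone_iff, take_wcat h, List.prefix_iff_eq_take, eq_comm]

theorem cone_append_subset (α γ : Addr) : cone (α ++ γ) ⊆ cone α := by
  rintro _ ⟨w, rfl⟩
  rw [wcat_append]
  exact wcat_mem_cone α _

theorem disjoint_cone {α β : Addr} (hlen : α.length = β.length) (hne : α ≠ β) :
    Disjoint (cone α) (cone β) := by
  refine Set.disjoint_left.2 fun x hα hβ => hne ?_
  rw [← mem_cone_iff.1 hα, hlen, mem_cone_iff.1 hβ]

theorem exists_forall_length_le_imp_mem {A : Type*} {S : Set (List A)} (hS : Sᶜ.Finite) :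
    ∃ N, ∀ α : List A, N ≤ α.length → α ∈ S := by
  obtain ⟨N, hN⟩ := (hS.image List.length).bddAbove
  refine ⟨N + 1, fun α hα => by_contra fun hmem => ?_⟩
  have := hN (Set.mem_image_of_mem List.length hmem)
  omega

/-! ### Topology of Cantor space -/

theorem cone_take_eq_cylinder (n : ℕ) (x : Cantor) :
    cone (Cantor.take n x) = PiNat.cylinder (E := fun _ => Bool) x n := by
  ext y
  rw [mem_cone_iff, Cantor.length_take, PiNat.mem_cylinder_iff, Cantor.take, Cantor.take,
    List.ofFn_inj, funext_iff, Fin.forall_iff]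

theorem isOpen_cone (α : Addr) : IsOpen (cone α) := by
  have h := mem_cone_iff.1 (wcat_mem_cone α fun _ => false)
  rw [← h, cone_take_eq_cylinder]
  exact PiNat.isOpen_cylinder _ _ _

theorem hasAntitoneBasis_nhds_cone_take (x : Cantor) :
    (nhds x).HasAntitoneBasis fun n => cone (Cantor.take n x) := by
  simp only [cone_take_eq_cylinder]
  refine ⟨⟨fun U => ?_⟩, fun _ _ h => PiNat.cylinder_anti x h⟩
  simp only [true_and, (PiNat.isTopologicalBasis_cylinders fun _ => Bool).mem_nhds_iff]
  constructor
  · rintro ⟨_, ⟨y, n, rfl⟩, hxy, hU⟩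
    exact ⟨n, (PiNat.mem_cylinder_iff_eq.1 hxy).trans_subset hU⟩
  · rintro ⟨n, hU⟩
    exact ⟨_, ⟨x, n, rfl⟩, PiNat.self_mem_cylinder x n, hU⟩

/-! ### Prefix substitutions -/

theorem actsOn.append {g : Equiv.Perm Cantor} {α β : Addr} (h : actsOn g α β) (γ : Addr) :
    actsOn g (α ++ γ) (β ++ γ) := fun w => by
  rw [wcat_append, wcat_append, h]

theorem actsOn.image_cone {g : Equiv.Perm Cantor} {α β : Addr} (h : actsOn g α β) :
    g '' cone α = cone β := by
  rw [cone, ← Set.range_comp]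
  exact congrArg Set.range (funext h)

theorem IsPrefixSubst.exists_actsOn {g : Equiv.Perm Cantor} (hg : IsPrefixSubst g) :
    ∃ N, ∀ α : Addr, N ≤ α.length → ∃ β, actsOn g α β := by
  obtain ⟨n, A, B, -, hcover, -, -, hAB⟩ := hg
  refine ⟨Finset.univ.sup fun i => (A i).length, fun α hα => ?_⟩
  obtain ⟨i, hi⟩ := Set.iUnion_eq_univ_iff.1 hcover (wcat α fun _ => false)
  have hlen : (A i).length ≤ α.length :=
    (Finset.le_sup (f := fun i => (A i).length) (Finset.mem_univ i)).trans hα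
  obtain ⟨γ, rfl⟩ := (wcat_mem_cone_iff hlen _).1 hi
  exact ⟨_, actsOn.append (hAB i) γ⟩

theorem isPrefixSubst_of_forall_length_eq {g : Equiv.Perm Cantor} (N : ℕ)
    (h : ∀ α : Addr, α.length = N → ∃ β, actsOn g α β) : IsPrefixSubst g := by
  have : Finite {α : Addr // α.length = N} := List.finite_length_eq Bool N
  obtain ⟨n, ⟨e⟩⟩ := Finite.exists_equiv_fin {α : Addr // α.length = N}
  let A (i : Fin n) : Addr := (e.symm i).1
  have hA (i : Fin n) : (A i).length = N := (e.symm i).2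
  have hdisj (i j : Fin n) (hij : i ≠ j) : Disjoint (cone (A i)) (cone (A j)) :=
    disjoint_cone ((hA i).trans (hA j).symm) fun h => hij (e.symm.injective (Subtype.ext h))
  have hcover : ⋃ i, cone (A i) = Set.univ := by
    refine Set.iUnion_eq_univ_iff.2 fun x => ?_
    refine ⟨e ⟨Cantor.take N x, Cantor.length_take N x⟩, ?_⟩
    simpa [A] using mem_cone_take N x
  choose B hB using fun i => h (A i) (hA i)
  have hcone (i : Fin n) : cone (B i) = g '' cone (A i) := (hB i).image_cone.symm
  refine ⟨n, A, B, hdisj, hcover, fun i j hij => ?_, ?_, hB⟩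
  · rw [hcone, hcone, Set.disjoint_image_iff g.injective]
    exact hdisj i j hij
  · simp only [hcone, ← Set.image_iUnion, hcover, Set.image_univ, g.range_eq_univ]

theorem isPrefixSubst_one : IsPrefixSubst 1 :=
  isPrefixSubst_of_forall_length_eq 0 fun α _ => ⟨α, fun _ => rfl⟩

theorem mem_setStab_iff {K : Set Cantor} {g : Equiv.Perm Cantor} :
    g ∈ setStab K ↔ IsPrefixSubst g ∧ g ⁻¹' K = K := by
  rw [Equiv.preimage_eq_iff_eq_image, eq_comm]
  rfl

/-! ### Interchanging two disjoint cones -/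

open Classical in
/-- The self-map of Cantor space that interchanges the prefixes `α` and `β`. When one of the two
words extends the other, the prefix `α` is tested first. -/
noncomputable def prefixSwap (α β : Addr) (x : Cantor) : Cantor :=
  if x ∈ cone α then wcat β (Cantor.drop α.length x)
  else if x ∈ cone β then wcat α (Cantor.drop β.length x)
  else x

section ConeSwap

variable {α β : Addr} (hd : Disjoint (cone α) (cone β))

theorem prefixSwap_wcat_left (w : Cantor) : prefixSwap α β (wcat α w) = wcat β w := by
  rw [prefixSwap, if_pos (wcat_mem_cone α w), drop_wcat]

include hd in
theorem prefixSwap_wcat_right (w : Cantor) : prefixSwap α β (wcat β w) = wcat α w := by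
  have hα : wcat β w ∉ cone α := Set.disjoint_right.1 hd (wcat_mem_cone β w)
  rw [prefixSwap, if_neg hα, if_pos (wcat_mem_cone β w), drop_wcat]

theorem prefixSwap_of_notMem {x : Cantor} (hα : x ∉ cone α) (hβ : x ∉ cone β) :
    prefixSwap α β x = x := by
  rw [prefixSwap, if_neg hα, if_neg hβ]

include hd in
theorem involutive_prefixSwap : Function.Involutive (prefixSwap α β) := by
  intro x
  by_cases hα : x ∈ cone α
  · obtain ⟨w, rfl⟩ := hα
    rw [prefixSwap_wcat_left, prefixSwap_wcat_right hd]
  by_cases hβ : x ∈ cone β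
  · obtain ⟨w, rfl⟩ := hβ
    rw [prefixSwap_wcat_right hd, prefixSwap_wcat_left]
  rw [prefixSwap_of_notMem hα hβ, prefixSwap_of_notMem hα hβ]

/-- The element of Thompson's group `V` that interchanges two disjoint cones by prefix
substitution and fixes every point outside them. -/
noncomputable def coneSwap : Equiv.Perm Cantor := (involutive_prefixSwap hd).toPerm

theorem actsOn_coneSwap_left : actsOn (coneSwap hd) α β := prefixSwap_wcat_left

theorem actsOn_coneSwap_right : actsOn (coneSwap hd) β α := prefixSwap_wcat_right hd

theorem coneSwap_of_notMem {x : Cantor} (hα : x ∉ cone α) (hβ : x ∉ cone β) :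
    coneSwap hd x = x :=
  prefixSwap_of_notMem hα hβ

theorem isPrefixSubst_coneSwap : IsPrefixSubst (coneSwap hd) := by
  refine isPrefixSubst_of_forall_length_eq (max α.length β.length) fun γ hγ => ?_
  by_cases hα : α <+: γ
  · obtain ⟨δ, rfl⟩ := hα
    exact ⟨_, (actsOn_coneSwap_left hd).append δ⟩
  by_cases hβ : β <+: γ
  · obtain ⟨δ, rfl⟩ := hβ
    exact ⟨_, (actsOn_coneSwap_right hd).append δ⟩
  refine ⟨γ, fun w => coneSwap_of_notMem hd ?_ ?_⟩
  · rwa [wcat_mem_cone_iff (by omega)]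
  · rwa [wcat_mem_cone_iff (by omega)]

end ConeSwap

/-! ### Tails of a set of infinite words -/

/-- The tail set of `K` at the address `α`: the infinite words `w` with `αw ∈ K`, that is, the
part of `K` inside the cone `α𝔠`, seen from `α`. -/
def tailSet (K : Set Cantor) (α : Addr) : Set Cantor := wcat α ⁻¹' K

/-- The type system of `K`: two addresses have the same type if `K` has the same tail set at both.
For a suitable `K` it recovers a given simple atomic quasinuclear type system. -/
def SameTailSet (K : Set Cantor) (α β : Addr) : Prop := tailSet K α = tailSet K β

section TailSet

variable {K : Set Cantor} {α β : Addr}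

theorem mem_tailSet {w : Cantor} : w ∈ tailSet K α ↔ wcat α w ∈ K := Iff.rfl

@[simp]
theorem tailSet_nil (K : Set Cantor) : tailSet K [] = K := by
  ext w
  rw [mem_tailSet, wcat_nil]

theorem tailSet_append (K : Set Cantor) (α β : Addr) :
    tailSet K (α ++ β) = tailSet (tailSet K α) β := by
  ext w
  simp only [mem_tailSet, wcat_append]

theorem isTypeSystem_sameTailSet (K : Set Cantor) : IsTypeSystem (SameTailSet K) := by
  refine ⟨⟨fun _ => rfl, Eq.symm, Eq.trans⟩, fun α β h => ?_, fun α β h₀ h₁ => ?_⟩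
  · simp only [SameTailSet, tailSet_append]
    exact ⟨congrArg (tailSet · [false]) h, congrArg (tailSet · [true]) h⟩
  · simp only [SameTailSet, tailSet_append] at h₀ h₁
    ext w
    obtain ⟨γ, u, hγ, rfl⟩ := exists_eq_wcat w 1
    obtain ⟨b, rfl⟩ := List.length_eq_one_iff.1 hγ
    cases b
    · exact Set.ext_iff.1 h₀ u
    · exact Set.ext_iff.1 h₁ u

theorem tailSet_eq_of_actsOn {g : Equiv.Perm Cantor} (hg : g ⁻¹' K = K) (h : actsOn g α β) :
    tailSet K α = tailSet K β := by
  ext w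
  rw [mem_tailSet, mem_tailSet, ← h]
  exact (Set.ext_iff.1 hg (wcat α w)).symm

theorem setStab_subset_stabSet_sameTailSet (K : Set Cantor) :
    setStab K ⊆ StabSet (SameTailSet K) := by
  intro g hgK
  obtain ⟨hg, hK⟩ := mem_setStab_iff.1 hgK
  obtain ⟨N, hN⟩ := hg.exists_actsOn
  refine ⟨hg, {α | N ≤ α.length}, ?_, hN, fun α _ α' _ β β' h h' => ?_⟩
  · simpa only [Set.compl_ofPred, not_le] using List.finite_length_lt Bool N
  · rw [SameTailSet, SameTailSet, tailSet_eq_of_actsOn hK h, tailSet_eq_of_actsOn hK h']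

theorem coneSwap_mem_setStab (hd : Disjoint (cone α) (cone β))
    (h : tailSet K α = tailSet K β) : coneSwap hd ∈ setStab K := by
  refine mem_setStab_iff.2 ⟨isPrefixSubst_coneSwap hd, Set.ext fun x => ?_⟩
  rw [Set.mem_preimage]
  by_cases hα : x ∈ cone α
  · obtain ⟨w, rfl⟩ := hα
    rw [actsOn_coneSwap_left hd]
    exact (Set.ext_iff.1 h w).symm
  by_cases hβ : x ∈ cone β
  · obtain ⟨w, rfl⟩ := hβ
    rw [actsOn_coneSwap_right hd]
    exact Set.ext_iff.1 h w
  rw [coneSwap_of_notMem hd hα hβ]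

theorem tailSet_take_nonempty {x : Cantor} (hx : x ∈ K) (n : ℕ) :
    (tailSet K (Cantor.take n x)).Nonempty :=
  ⟨Cantor.drop n x, by rwa [mem_tailSet, wcat_take_drop]⟩

theorem isNowhereDense_of_exists_tailSet_eq_empty (hclosed : IsClosed K)
    (h : ∀ α, ∃ γ, tailSet K (α ++ γ) = ∅) : IsNowhereDense K := by
  rw [IsNowhereDense, hclosed.closure_eq, Set.eq_empty_iff_forall_notMem]
  intro x hx
  obtain ⟨n, -, hn⟩ :=
    (hasAntitoneBasis_nhds_cone_take x).toHasBasis.mem_iff.1 (mem_interior_iff_mem_nhds.1 hx)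
  obtain ⟨γ, hγ⟩ := h (Cantor.take n x)
  have hmem : (fun _ => false) ∈ tailSet K (Cantor.take n x ++ γ) :=
    hn (cone_append_subset _ γ (wcat_mem_cone _ _))
  rwa [hγ] at hmem

theorem preperfect_of_exists_tailSet_children_nonempty
    (h : ∀ α, (tailSet K α).Nonempty → ∃ γ, ∀ b, (tailSet K (α ++ γ ++ [b])).Nonempty) :
    Preperfect K := by
  refine fun x hx => accPt_iff_nhds.2 fun U hU => ?_
  obtain ⟨n, -, hn⟩ := (hasAntitoneBasis_nhds_cone_take x).toHasBasis.mem_iff.1 hU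
  obtain ⟨γ, hγ⟩ := h _ (tailSet_take_nonempty hx n)
  -- the child in which the next letter differs from that of `x` supplies a point other than `x`
  obtain ⟨w, hw⟩ := hγ !x (Cantor.take n x ++ γ).length
  refine ⟨_, ⟨hn ?_, hw⟩, fun heq => ?_⟩
  · rw [List.append_assoc]
    exact cone_append_subset _ _ (wcat_mem_cone _ w)
  · have hletter := wcat_append_singleton_length (Cantor.take n x ++ γ)
      (!x (Cantor.take n x ++ γ).length) w
    rw [heq] at hletter
    exact (Bool.eq_not_self _).1 hletter

theorem exists_mem_setStab_apply_mem_cone {x : Cantor} (hx : x ∈ cone α)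
    (hlen : α.length = β.length) {γ : Addr} (h : tailSet K (β ++ γ) = tailSet K α) :
    ∃ g ∈ setStab K, g x ∈ cone β := by
  by_cases hαβ : α = β
  · exact ⟨1, mem_setStab_iff.2 ⟨isPrefixSubst_one, rfl⟩, hαβ ▸ hx⟩
  · have hd : Disjoint (cone α) (cone (β ++ γ)) :=
      (disjoint_cone hlen hαβ).mono_right (cone_append_subset β γ)
    refine ⟨coneSwap hd, coneSwap_mem_setStab hd h.symm, cone_append_subset β γ ?_⟩
    rw [← (actsOn_coneSwap_left hd).image_cone]
    exact Set.mem_image_of_mem _ hx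

theorem subset_closure_orbit_setStab {t : ℕ}
    (h : ∀ α β : Addr, t ≤ α.length → t ≤ β.length → (tailSet K α).Nonempty →
      (tailSet K β).Nonempty → ∃ γ, tailSet K (β ++ γ) = tailSet K α)
    {x : Cantor} (hx : x ∈ K) : K ⊆ closure {y | ∃ g ∈ setStab K, y = g x} := by
  intro y hy
  rw [mem_closure_iff_nhds_basis ((hasAntitoneBasis_nhds_cone_take y).hasBasis_ge t)]
  intro n hn
  obtain ⟨γ, hγ⟩ := h (Cantor.take n x) (Cantor.take n y)
    (hn.trans_eq (Cantor.length_take n x).symm) (hn.trans_eq (Cantor.length_take n y).symm)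
    (tailSet_take_nonempty hx n) (tailSet_take_nonempty hy n)
  obtain ⟨g, hg, hgx⟩ := exists_mem_setStab_apply_mem_cone (mem_cone_take n x)
    ((Cantor.length_take n x).trans (Cantor.length_take n y).symm) hγ
  exact ⟨g x, ⟨g, hg, rfl⟩, hgx⟩

end TailSet

/-! ### Infinite words avoiding a set of addresses -/

/-- The infinite words having no prefix in `R`. -/
def avoid (R : Set Addr) : Set Cantor := (⋃ α ∈ R, cone α)ᶜ

/-- `S` is parent-closed: it contains every address both of whose children it contains. -/
def ParentClosed (S : Set Addr) : Prop :=
  ∀ α, α ++ [false] ∈ S → α ++ [true] ∈ S → α ∈ S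

theorem mem_avoid_iff {R : Set Addr} {x : Cantor} : x ∈ avoid R ↔ ∀ α ∈ R, x ∉ cone α := by
  simp [avoid]

theorem isClosed_avoid (R : Set Addr) : IsClosed (avoid R) :=
  (isOpen_biUnion fun α _ => isOpen_cone α).isClosed_compl

theorem ChildClosed.append_mem {S : Set Addr} (hS : ChildClosed S) {α : Addr} (hα : α ∈ S)
    (γ : Addr) : α ++ γ ∈ S := by
  induction γ using List.reverseRecOn with
  | nil => rwa [List.append_nil]
  | append_singleton γ b ih =>
    rw [← List.append_assoc]
    cases b
    · exact (hS _ ih).1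
    · exact (hS _ ih).2

theorem exists_forall_append_take {P : Addr → Prop} (hP : ∀ α, P α → ∃ b, P (α ++ [b]))
    {α : Addr} (hα : P α) : ∃ w : Cantor, ∀ n, P (α ++ Cantor.take n w) := by
  choose! next hnext using hP
  let path (n : ℕ) : Addr := (fun β => β ++ [next β])^[n] α
  have path_succ (n : ℕ) : path (n + 1) = path n ++ [next (path n)] :=
    Function.iterate_succ_apply' _ n α
  have hpath (n : ℕ) : P (path n) := by
    induction n with
    | zero => exact hα
    | succ n ih => exact path_succ n ▸ hnext _ ih
  let w : Cantor := fun n => next (path n)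
  have path_eq (n : ℕ) : path n = α ++ Cantor.take n w := by
    induction n with
    | zero => exact (List.append_nil α).symm
    | succ n ih => rw [Cantor.take_succ, ← List.append_assoc, ← ih, path_succ]
  exact ⟨w, fun n => path_eq n ▸ hpath n⟩

section Avoid

variable {R : Set Addr} (hR : ChildClosed R)

include hR

theorem ChildClosed.wcat_mem_avoid_iff {α : Addr} {w : Cantor} :
    wcat α w ∈ avoid R ↔ ∀ n, α ++ Cantor.take n w ∉ R := by
  have hmem (n : ℕ) : wcat α w = wcat (α ++ Cantor.take n w) (Cantor.drop n w) := by
    rw [wcat_append, wcat_take_drop]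
  rw [mem_avoid_iff]
  constructor
  · exact fun h n hn => h _ hn (hmem n ▸ wcat_mem_cone _ _)
  · intro h β hβ hβw
    rw [hmem β.length, wcat_mem_cone_iff (by simp)] at hβw
    obtain ⟨γ, hγ⟩ := hβw
    exact h β.length (hγ ▸ hR.append_mem hβ γ)

theorem ChildClosed.tailSet_avoid_congr {α β : Addr} (h : ∀ γ, α ++ γ ∈ R ↔ β ++ γ ∈ R) :
    tailSet (avoid R) α = tailSet (avoid R) β := by
  ext w
  simp only [mem_tailSet, hR.wcat_mem_avoid_iff, h]

theorem ChildClosed.tailSet_avoid_nonempty_iff (hR' : ParentClosed R) {α : Addr} :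
    (tailSet (avoid R) α).Nonempty ↔ α ∉ R := by
  constructor
  · rintro ⟨w, hw⟩ hα
    exact mem_avoid_iff.1 hw α hα (wcat_mem_cone α w)
  · intro hα
    have exists_child (β : Addr) (hβ : β ∉ R) : ∃ b, β ++ [b] ∉ R := by
      by_contra! hall
      exact hβ (hR' β (hall false) (hall true))
    obtain ⟨w, hw⟩ := exists_forall_append_take exists_child hα
    exact ⟨w, hR.wcat_mem_avoid_iff.2 hw⟩

theorem ChildClosed.tailSet_avoid_eq_empty_iff (hR' : ParentClosed R) {α : Addr} :
    tailSet (avoid R) α = ∅ ↔ α ∈ R := by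
  rw [← Set.not_nonempty_iff_eq_empty, hR.tailSet_avoid_nonempty_iff hR', not_not]

end Avoid

/-! ### Monochromatic addresses -/

/-- The addresses all of whose descendants have the same type as they do. In an atomic
quasinuclear type system these form the nucleus. -/
def monochromatic (r : Addr → Addr → Prop) : Set Addr := {α | ∀ γ, r α (α ++ γ)}

theorem childClosed_monochromatic {r : Addr → Addr → Prop} (hr : Equivalence r) :
    ChildClosed (monochromatic r) := by
  have append_mem (α : Addr) (hα : α ∈ monochromatic r) (b : Bool) :
      α ++ [b] ∈ monochromatic r := fun γ => by
    rw [List.append_assoc]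
    exact hr.trans (hr.symm (hα [b])) (hα ([b] ++ γ))
  exact fun α hα => ⟨append_mem α hα false, append_mem α hα true⟩

theorem stabSet_subset_setStab_avoid_monochromatic {r : Addr → Addr → Prop}
    (hr : Equivalence r) : StabSet r ⊆ setStab (avoid (monochromatic r)) := by
  rintro g ⟨hg, Ω₀, hfin, hdef, hstab⟩
  obtain ⟨N, hN⟩ := exists_forall_length_le_imp_mem hfin
  have length_append_ge {α : Addr} (hα : N ≤ α.length) (γ : Addr) : N ≤ (α ++ γ).length :=
    hα.trans (List.prefix_append α γ).length_le
  have mem_iff {α β : Addr} (hα : N ≤ α.length) (h : actsOn g α β) :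
      α ∈ monochromatic r ↔ β ∈ monochromatic r :=
    forall_congr' fun γ =>
      hstab α (hN α hα) (α ++ γ) (hN _ (length_append_ge hα γ)) β _ h (h.append γ)
  refine mem_setStab_iff.2 ⟨hg, Set.ext fun x => ?_⟩
  obtain ⟨α, w, hα, rfl⟩ := exists_eq_wcat x N
  obtain ⟨β, hβ⟩ := hdef α (hN α hα.ge)
  have hres : tailSet (avoid (monochromatic r)) α = tailSet (avoid (monochromatic r)) β :=
    (childClosed_monochromatic hr).tailSet_avoid_congr fun γ =>
      mem_iff (length_append_ge hα.ge γ) (hβ.append γ)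
  rw [Set.mem_preimage, hβ]
  exact (Set.ext_iff.1 hres w).symm

/-! ### Quasinuclear type systems -/

theorem SimpleTS.eq_of_isQuotientOf {r s : Addr → Addr → Prop} (hr : SimpleTS r)
    (hs : IsQuotientOf s r) (hne : ∃ α β, ¬ s α β) : s = r := by
  obtain ⟨α, β, hαβ⟩ := hne
  rcases hr.2.2 s hs with h | h
  · exact funext₂ fun α β => propext (h α β)
  · exact absurd (h α β) hαβ

theorem Coherent.append {r : Addr → Addr → Prop} (hr : Coherent r) {α β : Addr} (h : r α β)
    (γ : Addr) : r (α ++ γ) (β ++ γ) := by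
  induction γ using List.reverseRecOn with
  | nil => rwa [List.append_nil, List.append_nil]
  | append_singleton γ b ih =>
    rw [← List.append_assoc, ← List.append_assoc]
    cases b
    · exact (hr _ _ ih).1
    · exact (hr _ _ ih).2

theorem Saturated.mem_iff {r : Addr → Addr → Prop} (hr : Equivalence r) {S : Set Addr}
    (hS : Saturated r S) {α β : Addr} (h : r α β) : α ∈ S ↔ β ∈ S :=
  ⟨fun hα => hS α hα β h, fun hβ => hS β hβ α (hr.symm h)⟩

theorem IsSingleType.rel {r : Addr → Addr → Prop} (hr : Equivalence r) {S : Set Addr}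
    (hS : IsSingleType r S) {α β : Addr} (hα : α ∈ S) (hβ : β ∈ S) : r α β := by
  obtain ⟨ρ, rfl⟩ := hS
  exact hr.trans (hr.symm hα) hβ

namespace QuasinuclearData

variable {r : Addr → Addr → Prop} {Q R : Set Addr}

theorem childClosed_nucleus (h : QuasinuclearData r Q R) : ChildClosed R := by
  obtain ⟨-, -, -, -, -, -, ⟨-, -, hR, -⟩, -⟩ := h
  exact hR

theorem notMem_nucleus (h : QuasinuclearData r Q R) {α : Addr} (hα : α ∈ Q) : α ∉ R := by
  obtain ⟨-, -, -, -, hdisj, -⟩ := h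
  exact Set.disjoint_left.1 hdisj hα

theorem nil_notMem_nucleus (h : QuasinuclearData r Q R) : [] ∉ R := by
  obtain ⟨α, hα⟩ := h.1
  exact fun hnil => h.notMem_nucleus hα (h.childClosed_nucleus.append_mem hnil α)

theorem exists_append_mem_nucleus (hr : Equivalence r) (h : QuasinuclearData r Q R)
    (α : Addr) : ∃ γ, α ++ γ ∈ R := by
  obtain ⟨-, ⟨ρ, hρ⟩, -, hRsat, -, ⟨t, -, hlong⟩, -, -, -, hreach⟩ := h
  rcases hlong (α ++ List.replicate t false) (by simp) with hQ | hR
  · obtain ⟨γ, hγ⟩ := hreach _ hQ ρ hρ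
    rw [List.append_assoc] at hγ
    exact ⟨_, (hRsat.mem_iff hr hγ).2 hρ⟩
  · exact ⟨_, hR⟩

theorem nucleus_eq_monochromatic (hr : Equivalence r) (h : QuasinuclearData r Q R)
    (hR : IsSingleType r R) : R = monochromatic r := by
  have hclosed := h.childClosed_nucleus
  ext α
  constructor
  · exact fun hα γ => hR.rel hr hα (hclosed.append_mem hα γ)
  · intro hα
    obtain ⟨γ, hγ⟩ := h.exists_append_mem_nucleus hr α
    obtain ⟨-, -, -, hRsat, -⟩ := h
    exact (hRsat.mem_iff hr (hα γ)).2 hγ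

theorem parentClosed_nucleus (hr : IsTypeSystem r) (h : QuasinuclearData r Q R)
    (hR : IsSingleType r R) : ParentClosed R := by
  intro α h₀ h₁
  obtain ⟨-, ⟨ρ, hρ⟩, -, hRsat, -, -, ⟨-, -, hclosed, -⟩, -⟩ := h
  have hαρ : r α ρ :=
    hr.2.2 α ρ (hR.rel hr.1 h₀ (hclosed ρ hρ).1) (hR.rel hr.1 h₁ (hclosed ρ hρ).2)
  exact (hRsat.mem_iff hr.1 hαρ).2 hρ

theorem tailSet_avoid_nonempty_iff (hr : IsTypeSystem r) (h : QuasinuclearData r Q R)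
    (hR : IsSingleType r R) {α : Addr} : (tailSet (avoid R) α).Nonempty ↔ α ∉ R :=
  h.childClosed_nucleus.tailSet_avoid_nonempty_iff (h.parentClosed_nucleus hr hR)

theorem tailSet_avoid_eq_of_rel (hr : IsTypeSystem r) (h : QuasinuclearData r Q R)
    {α β : Addr} (hαβ : r α β) : tailSet (avoid R) α = tailSet (avoid R) β := by
  refine h.childClosed_nucleus.tailSet_avoid_congr fun γ => ?_
  obtain ⟨-, -, -, hRsat, -⟩ := h
  exact hRsat.mem_iff hr.1 (hr.2.1.append hαβ γ)

theorem exists_append_mem_of_notMem_nucleus (hr : IsTypeSystem r) (h : QuasinuclearData r Q R)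
    (hR : IsSingleType r R) {α : Addr} (hα : α ∉ R) : ∃ γ, α ++ γ ∈ Q := by
  obtain ⟨w, hw⟩ := (h.tailSet_avoid_nonempty_iff hr hR).2 hα
  have htake := h.childClosed_nucleus.wcat_mem_avoid_iff.1 hw
  obtain ⟨-, -, -, -, -, ⟨t, -, hlong⟩, -⟩ := h
  exact ⟨Cantor.take t w, (hlong _ (by simp)).resolve_right (htake t)⟩

theorem avoid_nonempty (hr : IsTypeSystem r) (h : QuasinuclearData r Q R)
    (hR : IsSingleType r R) : (avoid R).Nonempty := by
  simpa only [tailSet_nil] using (h.tailSet_avoid_nonempty_iff hr hR).2 h.nil_notMem_nucleus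

theorem isNowhereDense_avoid (hr : IsTypeSystem r) (h : QuasinuclearData r Q R)
    (hR : IsSingleType r R) : IsNowhereDense (avoid R) := by
  refine isNowhereDense_of_exists_tailSet_eq_empty (isClosed_avoid R) fun α => ?_
  obtain ⟨γ, hγ⟩ := h.exists_append_mem_nucleus hr.1 α
  exact ⟨γ, (h.childClosed_nucleus.tailSet_avoid_eq_empty_iff
    (h.parentClosed_nucleus hr hR)).2 hγ⟩

theorem perfect_avoid (hr : IsTypeSystem r) (h : QuasinuclearData r Q R)
    (hR : IsSingleType r R) (hbranch : (QDagger Q).Nonempty) : Perfect (avoid R) := by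
  refine ⟨isClosed_avoid R, preperfect_of_exists_tailSet_children_nonempty fun α hα => ?_⟩
  have hαR : α ∉ R := (h.tailSet_avoid_nonempty_iff hr hR).1 hα
  obtain ⟨γ, hγ⟩ := h.exists_append_mem_of_notMem_nucleus hr hR hαR
  obtain ⟨θ, hθ, hθ₀, hθ₁⟩ := hbranch
  have ⟨_, _, hQsat, _, _, _, _, hQconn, _, _⟩ := h
  obtain ⟨δ, -, -, hδ⟩ := hQconn _ hγ θ hθ
  obtain ⟨hδ₀, hδ₁⟩ := hr.2.1 _ _ hδ
  refine ⟨γ ++ δ, fun b => (h.tailSet_avoid_nonempty_iff hr hR).2 (h.notMem_nucleus ?_)⟩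
  rw [← List.append_assoc]
  cases b
  · exact (hQsat.mem_iff hr.1 hδ₀).2 hθ₀
  · exact (hQsat.mem_iff hr.1 hδ₁).2 hθ₁

theorem sameTailSet_avoid_eq (hr : SimpleTS r) (h : QuasinuclearData r Q R)
    (hR : IsSingleType r R) : SameTailSet (avoid R) = r := by
  refine hr.eq_of_isQuotientOf
    ⟨isTypeSystem_sameTailSet _, fun α β => h.tailSet_avoid_eq_of_rel hr.1⟩ ?_
  obtain ⟨ρ, hρ⟩ := h.2.1
  refine ⟨[], ρ, fun heq => (h.tailSet_avoid_nonempty_iff hr.1 hR).1 ?_ hρ⟩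
  rw [← heq]
  exact (h.tailSet_avoid_nonempty_iff hr.1 hR).2 h.nil_notMem_nucleus

theorem stabSet_eq_setStab_avoid (hr : SimpleTS r) (h : QuasinuclearData r Q R)
    (hR : IsSingleType r R) : StabSet r = setStab (avoid R) := by
  apply Set.Subset.antisymm
  · rw [h.nucleus_eq_monochromatic hr.1.1 hR]
    exact stabSet_subset_setStab_avoid_monochromatic hr.1.1
  · simpa only [h.sameTailSet_avoid_eq hr hR] using setStab_subset_stabSet_sameTailSet (avoid R)

theorem avoid_subset_closure_orbit (hr : IsTypeSystem r) (h : QuasinuclearData r Q R)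
    (hR : IsSingleType r R) {x : Cantor} (hx : x ∈ avoid R) :
    avoid R ⊆ closure {y | ∃ g ∈ setStab (avoid R), y = g x} := by
  have ⟨_, _, _, _, _, ⟨t, _, hlong⟩, _, hQconn, _, _⟩ := h
  have mem_of_nonempty (α : Addr) (hlen : t ≤ α.length) (hα : (tailSet (avoid R) α).Nonempty) :
      α ∈ Q :=
    (hlong α hlen).resolve_right ((h.tailSet_avoid_nonempty_iff hr hR).1 hα)
  refine subset_closure_orbit_setStab (t := t) (fun α β hαt hβt hα hβ => ?_) hx
  obtain ⟨γ, -, -, hγ⟩ :=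
    hQconn β (mem_of_nonempty β hβt hβ) α (mem_of_nonempty α hαt hα)
  exact ⟨γ, h.tailSet_avoid_eq_of_rel hr hγ⟩

end QuasinuclearData

/-- **Statement 15.**  The stabilizer of a simple, branching, atomic quasinuclear type
system is the setwise stabilizer of a nonempty, nowhere dense, perfect subset `K` of
Cantor space, and the action of this stabilizer on `K` is minimal. -/
theorem stabSet_of_branching_atomicQuasinuclear
    (r : Addr → Addr → Prop) (hr : SimpleTS r)
    (h : ∃ Q R : Set Addr, QuasinuclearData r Q R ∧ IsSingleType r R ∧
      (QDagger Q).Nonempty) :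
    ∃ K : Set Cantor, K.Nonempty ∧ IsNowhereDense K ∧ Perfect K ∧
      StabSet r = setStab K ∧
      ∀ x ∈ K, K ⊆ closure { y : Cantor | ∃ g ∈ setStab K, y = g x } := by
  obtain ⟨Q, R, hQR, hR, hbranch⟩ := h
  exact ⟨avoid R, hQR.avoid_nonempty hr.1 hR, hQR.isNowhereDense_avoid hr.1 hR,
    hQR.perfect_avoid hr.1 hR hbranch, hQR.stabSet_eq_setStab_avoid hr hR,
    fun _ hx => hQR.avoid_subset_closure_orbit hr.1 hR hx⟩
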